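/- arXiv:2105.14200 — 2 statements merged into one kernel-verified Lean document; each statement's English description precedes it below -/
import Mathlib

section
/- Let p be a real number of the form p = 2i/(2j+1) with i, j positive integers and p > 2. Let (x_n)_{n≥1} be a real sequence with ∑_{n=1}^∞ |x_n|^p < ∞, and set y_n = ∑_{k=n}^∞ x_k/k (this series converges absolutely). Then ∑_{n=1}^∞ |y_n - x_n|^p ≤ (p-1)^p · ∑_{n=1}^∞ |x_n|^p. -/
open Filter Topology

lemma aux_log (k : ℝ) (hk : 1 ≤ k) : k * Real.log (1 + 2 / k) ≤ Real.log (2 * k + 1) := by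
  have hmono : MonotoneOn (fun k : ℝ => Real.log (2 * k + 1) - k * (Real.log (k + 2) - Real.log k))
      (Set.Ici 1) := by
    have hd : ∀ t : ℝ, 0 < t → HasDerivAt
        (fun k : ℝ => Real.log (2 * k + 1) - k * (Real.log (k + 2) - Real.log k))
        (2 / (2 * t + 1) - (1 * (Real.log (t + 2) - Real.log t) + t * (1 / (t + 2) - 1 / t))) t := by
      intro t ht
      have h1 : HasDerivAt (fun k : ℝ => 2 * k + 1) 2 t := by
        simpa using ((hasDerivAt_id t).const_mul 2).add_const 1
      have h2 : HasDerivAt (fun k : ℝ => k + 2) 1 t := (hasDerivAt_id t).add_const 2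
      exact (h1.log (by positivity)).sub ((hasDerivAt_id t).mul
        ((h2.log (by positivity)).sub ((hasDerivAt_id t).log ht.ne')))
    apply monotoneOn_of_deriv_nonneg (convex_Ici 1)
    · intro t ht
      exact (hd t (lt_of_lt_of_le one_pos ht)).continuousAt.continuousWithinAt
    · intro t ht
      rw [interior_Ici] at ht
      exact (hd t (lt_trans one_pos ht)).differentiableAt.differentiableWithinAt
    · intro t ht
      rw [interior_Ici] at ht
      have ht1 : 1 < t := ht
      have ht0 : 0 < t := by linarith
      rw [(hd t ht0).deriv]
      have hx : 0 < (t + 2) / t := by positivity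
      have h3 : Real.log ((t + 2) / t) ≤ ((t + 2) / t - ((t + 2) / t)⁻¹) / 2 := by
        rw [← Real.sinh_log hx]
        apply Real.self_le_sinh_iff.2
        apply Real.log_nonneg
        rw [le_div_iff₀ ht0]; linarith
      rw [Real.log_div (by positivity) ht0.ne'] at h3
      have h4 : 2 / (2 * t + 1) - (1 * (((t + 2) / t - ((t + 2) / t)⁻¹) / 2)
          + t * (1 / (t + 2) - 1 / t)) = 2 * (t + 1) * (t - 1) / (t * (t + 2) * (2 * t + 1)) := by
        field_simp
        ring
      have h5 : 0 ≤ 2 * (t + 1) * (t - 1) / (t * (t + 2) * (2 * t + 1)) := by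
        have : 0 ≤ t - 1 := by linarith
        positivity
      linarith
  have h := hmono (Set.mem_Ici.2 le_rfl) (Set.mem_Ici.2 hk) hk
  norm_num at h
  have hk0 : 0 < k := by linarith
  have : 1 + 2 / k = (k + 2) / k := by field_simp
  rw [this, Real.log_div (by positivity) hk0.ne']
  linarith

/-- the constant -/
noncomputable def cC (p : ℝ) : ℝ := p ^ (2 - p) * (p - 1) ^ (p - 1)

lemma cC_pos (p : ℝ) (hp : 2 < p) : 0 < cC p := by
  have : 0 < p - 1 := by linarith
  have : 0 < p := by linarith
  unfold cC; positivity

lemma cC_mul (p : ℝ) (hp : 2 < p) : cC p * p ^ (p - 2) = (p - 1) ^ (p - 1) := by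
  have h0 : 0 < p := by linarith
  unfold cC
  rw [mul_right_comm, ← Real.rpow_add h0]
  norm_num

lemma cC_div (p : ℝ) (hp : 2 < p) : cC p / p = (p - 1) ^ (p - 1) / p ^ (p - 1) := by
  have h0 : 0 < p := by linarith
  have : p ^ (p - 1) = p ^ (p - 2) * p := by
    rw [← Real.rpow_add_one h0.ne']; ring_nf
  rw [← cC_mul p hp, this]
  have : 0 < p ^ (p - 2) := by positivity
  field_simp

lemma key_lin (p : ℝ) (hp : 2 < p) (r : ℝ) (h1 : -(1 / p) ≤ r) (h2 : r ≤ 1 / p) :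
    (1 - r) ^ (p - 1) ≤ cC p * (1 - (p - 1) * r) := by
  have h0 : 0 < p := by linarith
  have hk : 0 < p - 1 := by linarith
  have hinv : 1 / p < 1 := by rw [div_lt_one h0]; linarith
  have hC := cC_pos p hp
  have hconv := (convexOn_rpow (p := p - 1) (by linarith))
  have e1 : (1 - 1 / p) ^ (p - 1) = cC p / p := by
    rw [cC_div p hp, ← Real.div_rpow hk.le h0.le]
    congr 1; field_simp
  have e2 : (1 + 1 / p) ^ (p - 1) ≤ cC p / p * (2 * p - 1) := by
    rw [cC_div p hp]
    have : 1 + 1 / p = (p + 1) / p := by field_simp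
    rw [this, Real.div_rpow (by linarith) h0.le, div_mul_eq_mul_div]
    apply div_le_div_of_nonneg_right _ (by positivity)
    have h3 := aux_log (p - 1) (by linarith)
    have h4 : 1 + 2 / (p - 1) = (p + 1) / (p - 1) := by field_simp; ring
    rw [h4, ← Real.log_rpow (by positivity), Real.log_le_log_iff (by positivity) (by linarith),
      Real.div_rpow (by linarith) hk.le, div_le_iff₀ (by positivity)] at h3
    linarith
  have ha : 0 ≤ (1 + p * r) / 2 := by
    have := mul_le_mul_of_nonneg_left h1 h0.le
    have e : p * -(1 / p) = -1 := by field_simp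
    linarith
  have hb : 0 ≤ (1 - p * r) / 2 := by
    have := mul_le_mul_of_nonneg_left h2 h0.le
    have e : p * (1 / p) = 1 := by field_simp
    linarith
  have hm1 : (1 - 1 / p) ∈ Set.Ici (0 : ℝ) := by
    rw [Set.mem_Ici]; linarith
  have hm2 : (1 + 1 / p) ∈ Set.Ici (0 : ℝ) := by
    rw [Set.mem_Ici]; positivity
  have h3 := hconv.2 hm1 hm2 ha hb (by ring)
  simp only [smul_eq_mul] at h3
  rw [e1] at h3
  have e3 : (1 + p * r) / 2 * (1 - 1 / p) + (1 - p * r) / 2 * (1 + 1 / p) = 1 - r := by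
    field_simp; ring
  rw [e3] at h3
  have := mul_le_mul_of_nonneg_left e2 hb
  have e4 : (1 + p * r) / 2 * (cC p / p) + (1 - p * r) / 2 * (cC p / p * (2 * p - 1))
    = cC p * (1 - (p - 1) * r) := by field_simp; ring
  linarith

lemma cC_ge_one (p : ℝ) (hp : 2 < p) : 1 ≤ cC p := by
  have h0 : 0 < p := by linarith
  have := key_lin p hp 0 (by simp; positivity) (by positivity)
  simpa using this

/-- one-variable function -/
noncomputable def hE (p e u : ℝ) : ℝ :=
  cC p * (u ^ p - e * p * u ^ (p - 1)) - |u - e| ^ p + (p - 1) ^ p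

/-- its derivative over p -/
noncomputable def hD (p e u : ℝ) : ℝ :=
  cC p * (u ^ (p - 1) - e * (p - 1) * u ^ (p - 2)) - |u - e| ^ (p - 2) * (u - e)

lemma hE_deriv (p e u : ℝ) (hp : 2 < p) : HasDerivAt (hE p e) (p * hD p e u) u := by
  have a1 : HasDerivAt (fun u : ℝ => u ^ p) (p * u ^ (p - 1)) u :=
    Real.hasDerivAt_rpow_const (Or.inr (by linarith))
  have a2 : HasDerivAt (fun u : ℝ => u ^ (p - 1)) ((p - 1) * u ^ (p - 1 - 1)) u :=
    Real.hasDerivAt_rpow_const (Or.inr (by linarith))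
  have a3 : HasDerivAt (fun u : ℝ => |u - e| ^ p) (p * |u - e| ^ (p - 2) * (u - e)) u := by
    have := (hasDerivAt_abs_rpow (u - e) (p := p) (by linarith)).comp u
      ((hasDerivAt_id u).sub_const e)
    rw [mul_one] at this
    exact this
  have := (((a1.sub (a2.const_mul (e * p))).const_mul (cC p)).sub a3).add_const ((p - 1) ^ p)
  refine this.congr_deriv ?_
  unfold hD
  rw [show p - 1 - 1 = p - 2 by ring]
  ring

lemma hE_formula (p e u : ℝ) (hp : 2 < p) (he : e * e = 1) (hu : 0 < u) :
    hE p e u = (u - e) * hD p e u + ((p - 1) ^ p - cC p * (p - 1) * u ^ (p - 2)) := by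
  unfold hE hD
  have e1 : u ^ (p - 1) = u ^ (p - 2) * u := by
    rw [← Real.rpow_add_one hu.ne']; ring_nf
  have e2 : u ^ p = u ^ (p - 2) * u * u := by
    rw [← e1, ← Real.rpow_add_one hu.ne']; ring_nf
  have e3 : |u - e| ^ p = |u - e| ^ (p - 2) * (u - e) * (u - e) := by
    rcases eq_or_ne (u - e) 0 with h | h
    · rw [h]; simp [Real.zero_rpow (show p ≠ 0 by linarith)]
    · rw [mul_assoc, ← abs_mul_abs_self, ← mul_assoc, ← Real.rpow_add_one (by simpa using h),
        ← Real.rpow_add_one (by simpa using h)]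
      ring_nf
  rw [e1, e2, e3]
  linear_combination (-cC p * (p - 1) * u ^ (p - 2)) * he

lemma hD_nonneg (p e u : ℝ) (hp : 2 < p) (he : e = 1 ∨ e = -1) (hu : p ≤ u) : 0 ≤ hD p e u := by
  have h0 : 0 < p := by linarith
  have hu0 : 0 < u := by linarith
  have hi : 1 / u ≤ 1 / p := one_div_le_one_div_of_le h0 hu
  have hi0 : 0 < 1 / u := by positivity
  have h := key_lin p hp (e / u) (by rcases he with rfl | rfl <;> (try rw [neg_div]) <;> linarith)
    (by rcases he with rfl | rfl <;> (try rw [neg_div]) <;> linarith)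
  have hue : 0 < u - e := by rcases he with rfl | rfl <;> linarith
  unfold hD
  rw [abs_of_pos hue, ← Real.rpow_add_one hue.ne']
  have e0 : 1 - e / u = (u - e) / u := by field_simp
  rw [e0, Real.div_rpow hue.le hu0.le, div_le_iff₀ (by positivity)] at h
  have e1 : u ^ (p - 1) = u ^ (p - 2) * u := by
    rw [← Real.rpow_add_one hu0.ne']; ring_nf
  have e2 : cC p * (1 - (p - 1) * (e / u)) * u ^ (p - 1) =
      cC p * (u ^ (p - 1) - e * (p - 1) * u ^ (p - 2)) := by
    rw [e1]; field_simp
  rw [show p - 2 + 1 = p - 1 by ring]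
  linarith

lemma hE_nonneg (p e u : ℝ) (hp : 2 < p) (he : e = 1 ∨ e = -1) (hu : 0 ≤ u) : 0 ≤ hE p e u := by
  have h0 : 0 < p := by linarith
  have hC := cC_pos p hp
  have hk : 0 < p - 1 := by linarith
  have hcont : Continuous (hE p e) :=
    continuous_iff_continuousAt.2 fun u => (hE_deriv p e u hp).continuousAt
  have hee : e * e = 1 := by rcases he with rfl | rfl <;> norm_num
  have hform : ∀ m, 0 < m → m ≤ p → 0 ≤ (m - e) * hD p e m → 0 ≤ hE p e m := by
    intro m hm hmp h
    rw [hE_formula p e m hp hee hm]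
    have h1 : m ^ (p - 2) ≤ p ^ (p - 2) := Real.rpow_le_rpow hm.le hmp (by linarith)
    have h2 : (p - 1) ^ p = cC p * p ^ (p - 2) * (p - 1) := by
      rw [cC_mul p hp, ← Real.rpow_add_one hk.ne']; ring_nf
    have h3 := mul_le_mul_of_nonneg_left h1 (show 0 ≤ cC p * (p - 1) by positivity)
    linarith
  have hpe : 0 ≤ hE p e p := by
    apply hform p h0 le_rfl
    apply mul_nonneg _ (hD_nonneg p e p hp he le_rfl)
    rcases he with rfl | rfl <;> linarith
  have hz : 0 ≤ hE p e 0 := by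
    unfold hE
    rw [Real.zero_rpow (by linarith), Real.zero_rpow (by linarith)]
    have : |0 - e| = 1 := by rcases he with rfl | rfl <;> simp
    rw [this]
    have := Real.one_le_rpow (show 1 ≤ p - 1 by linarith) h0.le
    simp; linarith
  rcases le_total u p with hup | hup
  · obtain ⟨m, hm, hmin⟩ := isCompact_Icc.exists_isMinOn (Set.nonempty_Icc.2 h0.le)
      hcont.continuousOn (s := Set.Icc 0 p)
    refine le_trans ?_ (hmin (show u ∈ Set.Icc 0 p from ⟨hu, hup⟩))
    rcases eq_or_lt_of_le hm.1 with h | h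
    · rw [← h]; exact hz
    rcases eq_or_lt_of_le hm.2 with h' | h'
    · rw [h']; exact hpe
    apply hform m h hm.2
    have hl : IsLocalMin (hE p e) m := hmin.isLocalMin (Icc_mem_nhds h h')
    have := hl.hasDerivAt_eq_zero (hE_deriv p e m hp)
    have : hD p e m = 0 := by
      rcases mul_eq_zero.1 this with h | h
      · linarith
      · exact h
    rw [this]; simp
  · have hmono : MonotoneOn (hE p e) (Set.Ici p) := by
      apply monotoneOn_of_deriv_nonneg (convex_Ici p) hcont.continuousOn
      · intro t _
        exact (hE_deriv p e t hp).differentiableAt.differentiableWithinAt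
      · intro t ht
        rw [interior_Ici] at ht
        rw [(hE_deriv p e t hp).deriv]
        exact mul_nonneg h0.le (hD_nonneg p e t hp he (le_of_lt ht))
    exact hpe.trans (hmono (Set.mem_Ici.2 le_rfl) (Set.mem_Ici.2 hup) hup)

lemma pointwise (p a X : ℝ) (hp : 2 < p) :
    |a - X| ^ p - (p - 1) ^ p * |X| ^ p ≤ cC p * (|a| ^ p - p * (|a| ^ (p - 2) * a) * X) := by
  have h0 : 0 < p := by linarith
  rcases eq_or_ne X 0 with rfl | hX
  · have := cC_ge_one p hp
    have h2 : 0 ≤ |a| ^ p := by positivity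
    simp [Real.zero_rpow h0.ne']
    nlinarith
  have hX' : 0 < |X| := abs_pos.2 hX
  -- e with a * X = e * |a| * |X|
  obtain ⟨e, he, hae⟩ : ∃ e : ℝ, (e = 1 ∨ e = -1) ∧ a * X = e * (|a| * |X|) := by
    rcases le_total 0 (a * X) with h | h
    · exact ⟨1, Or.inl rfl, by rw [← abs_mul, abs_of_nonneg h, one_mul]⟩
    · exact ⟨-1, Or.inr rfl, by rw [← abs_mul, abs_of_nonpos h]; ring⟩
  have hee : e * e = 1 := by rcases he with rfl | rfl <;> norm_num
  have h := hE_nonneg p e (|a| / |X|) hp he (by positivity)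
  have hXp : 0 < |X| ^ p := by positivity
  have h1 := mul_nonneg hXp.le h
  have d1 : |X| ^ p * |(|a| / |X|) - e| ^ p = |a - X| ^ p := by
    rw [← Real.mul_rpow (by positivity) (by positivity)]
    congr 1
    rw [show |X| * |(|a| / |X|) - e| = abs (|X| * (|a| / |X| - e)) by rw [abs_mul, abs_abs]]
    rw [← sq_eq_sq₀ (abs_nonneg _) (abs_nonneg _), sq_abs, sq_abs]
    have : |X| * (|a| / |X| - e) = |a| - e * |X| := by field_simp
    rw [this]
    have s1 := sq_abs a
    have s2 := sq_abs X
    linear_combination s1 + s2 + |X| ^ 2 * hee + 2 * hae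
  have d2 : |X| ^ p * (|a| / |X|) ^ p = |a| ^ p := by
    rw [← Real.mul_rpow (by positivity) (by positivity)]
    congr 1; field_simp
  have d3 : |X| ^ p * (e * p * (|a| / |X|) ^ (p - 1)) = p * (|a| ^ (p - 2) * a) * X := by
    rcases eq_or_ne a 0 with rfl | ha
    · simp [Real.zero_rpow (show p - 1 ≠ 0 by linarith)]
    have ha' : 0 < |a| := abs_pos.2 ha
    rw [Real.div_rpow (abs_nonneg _) (abs_nonneg _)]
    have e1 : |a| ^ (p - 1) = |a| ^ (p - 2) * |a| := by
      rw [← Real.rpow_add_one ha'.ne']; ring_nf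
    have e2 : |X| ^ p = |X| ^ (p - 1) * |X| := by
      rw [← Real.rpow_add_one hX'.ne']; ring_nf
    have : 0 < |X| ^ (p - 1) := by positivity
    rw [e1, e2]
    have : |X| ^ (p - 1) * |X| * (e * p * (|a| ^ (p - 2) * |a| / |X| ^ (p - 1))) =
      p * |a| ^ (p - 2) * (e * (|a| * |X|)) := by field_simp
    rw [this, ← hae]; ring
  unfold hE at h1
  have : |X| ^ p * (cC p * ((|a| / |X|) ^ p - e * p * (|a| / |X|) ^ (p - 1)) -
      |(|a| / |X|) - e| ^ p + (p - 1) ^ p) =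
      cC p * (|X| ^ p * (|a| / |X|) ^ p - |X| ^ p * (e * p * (|a| / |X|) ^ (p - 1))) -
      |X| ^ p * |(|a| / |X|) - e| ^ p + (p - 1) ^ p * |X| ^ p := by ring
  rw [this, d1, d2, d3] at h1
  linarith

lemma conv_lower (p a t : ℝ) (hp : 2 < p) :
    |a| ^ p - p * (|a| ^ (p - 2) * a) * t ≤ |a - t| ^ p := by
  have h0 : 0 < p := by linarith
  rcases eq_or_ne a 0 with rfl | ha
  · simp [Real.zero_rpow h0.ne']; positivity
  have ha' : 0 < |a| := abs_pos.2 ha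
  have hb : 1 + p * (-t / a) ≤ |1 + -t / a| ^ p := by
    rcases le_total (-1) (-t / a) with h | h
    · rw [abs_of_nonneg (by linarith)]
      exact one_add_mul_self_le_rpow_one_add h (by linarith)
    · have : 0 ≤ |1 + -t / a| ^ p := by positivity
      nlinarith
  have := mul_le_mul_of_nonneg_left hb (show 0 ≤ |a| ^ p by positivity)
  rw [← Real.mul_rpow (abs_nonneg _) (abs_nonneg _), ← abs_mul] at this
  have e1 : a * (1 + -t / a) = a - t := by field_simp; ring
  have e2 : |a| ^ p = |a| ^ (p - 2) * (a * a) := by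
    rw [← abs_mul_abs_self, ← mul_assoc, ← Real.rpow_add_one ha'.ne', ← Real.rpow_add_one ha'.ne']
    ring_nf
  rw [e1] at this
  refine le_trans (le_of_eq ?_) this
  rw [e2]; field_simp; ring

lemma finite_ineq (p : ℝ) (hp : 2 < p) (X : ℕ → ℝ) (M : ℕ) :
    ∑ n ∈ Finset.range M, |(∑ k ∈ Finset.Ico n M, X k / ((k : ℝ) + 1)) - X n| ^ p ≤
      (p - 1) ^ p * ∑ n ∈ Finset.range M, |X n| ^ p := by
  set Y : ℕ → ℝ := fun n => ∑ k ∈ Finset.Ico n M, X k / ((k : ℝ) + 1) with hY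
  have hC := cC_pos p hp
  have hs : ∀ n ∈ Finset.range M, |Y n - X n| ^ p - (p - 1) ^ p * |X n| ^ p ≤
      (fun n : ℕ => cC p * (n * |Y n| ^ p)) (n + 1) - (fun n : ℕ => cC p * (n * |Y n| ^ p)) n := by
    intro n hn
    have hn := Finset.mem_range.1 hn
    have e : Y (n + 1) = Y n - X n / ((n : ℝ) + 1) := by
      simp only [hY]
      rw [Finset.sum_eq_sum_Ico_succ_bot hn]; ring
    refine (pointwise p (Y n) (X n) hp).trans ?_
    have h2 := conv_lower p (Y n) (X n / ((n : ℝ) + 1)) hp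
    rw [← e] at h2
    have h3 := mul_le_mul_of_nonneg_left h2 (show (0 : ℝ) ≤ (n : ℝ) + 1 by positivity)
    have e3 : ((n : ℝ) + 1) * (|Y n| ^ p - p * (|Y n| ^ (p - 2) * Y n) * (X n / ((n : ℝ) + 1)))
      = ((n : ℝ) + 1) * |Y n| ^ p - p * (|Y n| ^ (p - 2) * Y n) * X n := by field_simp
    rw [e3] at h3
    push_cast
    rw [← mul_sub]
    apply mul_le_mul_of_nonneg_left _ hC.le
    linarith
  have h := Finset.sum_le_sum hs
  rw [Finset.sum_range_sub (fun n : ℕ => cC p * (n * |Y n| ^ p)), Finset.sum_sub_distrib, ← Finset.mul_sum] at h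
  have hM : Y M = 0 := by simp [hY]
  have h0 : p ≠ 0 := by linarith
  simp only [hM, abs_zero, Real.zero_rpow h0] at h
  simp at h
  linarith

/-- Theorem 1 (discrete): for `p = 2i/(2j+1) > 2` and a real sequence `(x_n)_{n≥1}` with
`∑ |x_n|^p < ∞`, setting `y_n = ∑_{k=n}^∞ x_k / k` (the series converges absolutely),
one has `∑ |y_n - x_n|^p ≤ (p-1)^p ∑ |x_n|^p`. (Sequences are indexed so that term `n`
of the paper is `x (n+1)` here, `n : ℕ`.) -/
theorem stmt3 (p : ℝ) (i j : ℕ) (hi : 0 < i) (hj : 0 < j)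
    (hp : p = 2 * (i : ℝ) / (2 * (j : ℝ) + 1)) (hp2 : 2 < p)
    (x : ℕ → ℝ) (hx : Summable fun n : ℕ => |x (n + 1)| ^ p)
    (y : ℕ → ℝ) (hy : ∀ n : ℕ, y n = ∑' k : ℕ, x (n + 1 + k) / ((n : ℝ) + 1 + k)) :
    (∀ n : ℕ, Summable fun k : ℕ => |x (n + 1 + k) / ((n : ℝ) + 1 + k)|) ∧
    (Summable fun n : ℕ => |y n - x (n + 1)| ^ p) ∧
    ∑' n : ℕ, |y n - x (n + 1)| ^ p ≤ (p - 1) ^ p * ∑' n : ℕ, |x (n + 1)| ^ p := by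
  have h0 : 0 < p := by linarith
  have hbase : Summable fun k : ℕ => |x (k + 1) / ((k : ℝ) + 1)| := by
    have hpq := Real.HolderConjugate.conjExponent (p := p) (by linarith)
    have h1 : Summable fun k : ℕ => (1 / ((k : ℝ) + 1)) ^ (Real.conjExponent p) := by
      have := (summable_nat_add_iff 1).2 (Real.summable_one_div_nat_rpow.2 hpq.symm.lt)
      refine this.congr fun k => ?_
      rw [Real.div_rpow (by positivity) (by positivity), Real.one_rpow]
      push_cast; rfl
    have h2 := Real.summable_mul_of_Lp_Lq_of_nonneg hpq (f := fun k : ℕ => |x (k + 1)|)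
      (g := fun k : ℕ => 1 / ((k : ℝ) + 1)) (fun _ => abs_nonneg _) (fun _ => by positivity) hx h1
    refine h2.congr fun k => ?_
    rw [abs_div, abs_of_pos (show (0 : ℝ) < (k : ℝ) + 1 by positivity)]; ring
  have hsum : ∀ n : ℕ, Summable fun k : ℕ => |x (n + 1 + k) / ((n : ℝ) + 1 + k)| := by
    intro n
    refine ((summable_nat_add_iff n).2 hbase).congr fun k => ?_
    rw [show k + n + 1 = n + 1 + k by ring]; push_cast
    rw [show (k : ℝ) + n + 1 = n + 1 + k by ring]
  have hlim : ∀ n : ℕ, Tendsto (fun M : ℕ => ∑ k ∈ Finset.Ico n M, x (k + 1) / ((k : ℝ) + 1))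
      atTop (𝓝 (y n)) := by
    intro n
    have h1 := (hsum n).of_abs.hasSum.tendsto_sum_nat
    rw [← hy n] at h1
    refine (h1.comp (tendsto_sub_atTop_nat n)).congr fun M => ?_
    rw [Finset.sum_Ico_eq_sum_range]
    refine Finset.sum_congr rfl fun k _ => ?_
    rw [show n + k + 1 = n + 1 + k by ring]; push_cast
    rw [show (n : ℝ) + k + 1 = n + 1 + k by ring]
  have hfin : ∀ N : ℕ, ∑ n ∈ Finset.range N, |y n - x (n + 1)| ^ p ≤
      (p - 1) ^ p * ∑' n : ℕ, |x (n + 1)| ^ p := by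
    intro N
    have ht : Tendsto (fun M : ℕ => ∑ n ∈ Finset.range N,
        |(∑ k ∈ Finset.Ico n M, x (k + 1) / ((k : ℝ) + 1)) - x (n + 1)| ^ p) atTop
        (𝓝 (∑ n ∈ Finset.range N, |y n - x (n + 1)| ^ p)) := by
      apply tendsto_finsetSum
      intro n _
      exact (((hlim n).sub_const _).abs).rpow_const (Or.inr h0.le)
    refine le_of_tendsto ht ?_
    filter_upwards [eventually_ge_atTop N] with M hM
    refine (Finset.sum_le_sum_of_subset_of_nonneg (Finset.range_mono hM)
      (fun _ _ _ => by positivity)).trans ?_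
    refine (finite_ineq p hp2 (fun n => x (n + 1)) M).trans ?_
    have hk : 0 < p - 1 := by linarith
    apply mul_le_mul_of_nonneg_left _ (by positivity)
    exact hx.sum_le_tsum _ (fun _ _ => by positivity)
  have hnn : ∀ n : ℕ, 0 ≤ |y n - x (n + 1)| ^ p := fun n => by positivity
  refine ⟨hsum, summable_of_sum_range_le hnn hfin, Real.tsum_le_of_sum_range_le hnn hfin⟩
end

section
/- Let 1 < p ≤ 2. For every real sequence (x_n)_{n≥1} with ∑_{n=1}^∞ |x_n|^p < ∞, setting y_n = (1/n)·∑_{k=1}^n x_k, one has ∑_{n=1}^∞ |y_n - x_n|^p ≤ (1/(p-1))^p · ∑_{n=1}^∞ |x_n|^p; moreover (1/(p-1))^p is the least such constant: for every c < (1/(p-1))^p there exists a real sequence (x_n) with 0 < ∑_{n=1}^∞ |x_n|^p < ∞ and ∑_{n=1}^∞ |y_n - x_n|^p > c · ∑_{n=1}^∞ |x_n|^p. That is, the operator norm of C - I on ℓ^p equals 1/(p-1). -/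
lemma key_log (p : ℝ) (hp1 : 1 < p) (hp2 : p ≤ 2) :
    2 * p - 1 ≤ ((p + 1) / (p - 1)) ^ (p - 1) := by
  have h0 : 0 < p - 1 := by linarith
  have hp : 0 < p := by linarith
  have hz : |1 / p| < 1 := by
    rw [abs_of_pos (by positivity), div_lt_one hp]; exact hp1
  have hw : |(p - 1) / p| < 1 := by
    rw [abs_of_pos (by positivity), div_lt_one hp]; linarith
  have s1 := (Real.hasSum_log_sub_log_of_abs_lt_one hz).mul_left (p - 1)
  have s2 := Real.hasSum_log_sub_log_of_abs_lt_one hw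
  have h := hasSum_le (fun k => ?_) s2 s1
  · rw [← Real.log_div (by positivity) (by rw [sub_ne_zero]; intro h; field_simp at h; linarith),
      ← Real.log_div (by positivity) (by rw [sub_ne_zero]; intro h; field_simp at h; linarith)] at h
    have e1 : (1 + (p - 1) / p) / (1 - (p - 1) / p) = 2 * p - 1 := by
      field_simp; ring
    have e2 : (1 + 1 / p) / (1 - 1 / p) = (p + 1) / (p - 1) := by
      field_simp
    rw [e1, e2] at h
    rw [Real.rpow_def_of_pos (by positivity), mul_comm (Real.log _)]
    calc 2 * p - 1 = Real.exp (Real.log (2 * p - 1)) := (Real.exp_log (by linarith)).symm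
      _ ≤ _ := Real.exp_le_exp.2 h
  · have : ((p - 1) / p) ^ (2 * k + 1) ≤ (p - 1) * (1 / p) ^ (2 * k + 1) := by
      rw [div_eq_mul_one_div, mul_pow]
      gcongr
      exact pow_le_of_le_one h0.le (by linarith) (by omega)
    calc _ ≤ 2 * (1 / (2 * (k : ℝ) + 1)) * ((p - 1) * (1 / p) ^ (2 * k + 1)) := by gcongr
      _ = _ := by ring

lemma K_ge (p : ℝ) (hp1 : 1 < p) (hp2 : p ≤ 2) : 1 ≤ (1 / (p - 1)) ^ p := by
  apply Real.one_le_rpow _ (by linarith)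
  rw [le_div_iff₀ (by linarith)]; linarith

lemma pw_id (p r : ℝ) (hr : 0 < r) : r ^ (p - 1) = r * r ^ (p - 2) := by
  rw [mul_comm, ← Real.rpow_add_one hr.ne']; congr 1; ring

lemma pw_id' (p r : ℝ) (hp : 1 < p) (hr : 0 ≤ r) : r ^ p = r * r ^ (p - 1) := by
  rcases hr.eq_or_lt with rfl | hr
  · rw [Real.zero_rpow (by linarith)]; simp
  · rw [mul_comm, ← Real.rpow_add_one hr.ne']; congr 1; ring

lemma P_mul (p v : ℝ) (hp : 1 < p) (hv : 0 < v) :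
    p ^ (2 - p) * v ^ (p - 2) = (v / p) ^ (p - 2) := by
  rw [Real.div_rpow hv.le (by linarith), show (2 - p) = -(p - 2) by ring,
    Real.rpow_neg (by linarith)]
  field_simp

/-- derivative -/
lemma der (p c s e r : ℝ) (hp : 1 < p) (h : 0 < s * r + e) :
    HasDerivAt (fun r : ℝ => r ^ p + c * ((s * r + e) ^ p - p * (s * r) * (s * r + e) ^ (p - 1)))
      (p * r ^ (p - 1) - c * (p - 1) * p * (s * s) * r * (s * r + e) ^ (p - 2)) r := by
  have h1 : HasDerivAt (fun r : ℝ => r ^ p) (p * r ^ (p - 1)) r :=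
    Real.hasDerivAt_rpow_const (Or.inr hp.le)
  have hs : HasDerivAt (fun r : ℝ => s * r) s r := by
    simpa using (hasDerivAt_id r).const_mul s
  have hl : HasDerivAt (fun r : ℝ => s * r + e) s r := hs.add_const e
  have h2 := hl.rpow_const (p := p) (Or.inl h.ne')
  have h3 := hl.rpow_const (p := p - 1) (Or.inl h.ne')
  have h4 := h1.add ((h2.sub ((hs.const_mul p).mul h3)).const_mul c)
  refine HasDerivAt.congr_deriv (f := fun r : ℝ => r ^ p + c * ((s * r + e) ^ p - p * (s * r) * (s * r + e) ^ (p - 1))) h4 ?_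
  rw [show p - 1 - 1 = p - 2 by ring]
  ring

lemma cont (p c s e : ℝ) (hp : 1 < p) :
    Continuous (fun r : ℝ => r ^ p + c * ((s * r + e) ^ p - p * (s * r) * (s * r + e) ^ (p - 1))) := by
  have h1 : ∀ {f : ℝ → ℝ}, Continuous f → Continuous (fun r => f r ^ p) :=
    fun hf => hf.rpow_const (fun _ => Or.inr (by linarith))
  have h2 : ∀ {f : ℝ → ℝ}, Continuous f → Continuous (fun r => f r ^ (p - 1)) :=
    fun hf => hf.rpow_const (fun _ => Or.inr (by linarith))
  have a1 := h1 continuous_id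
  have a2 := h1 (f := fun r => s * r + e) (by fun_prop)
  have a3 := h2 (f := fun r => s * r + e) (by fun_prop)
  simp only [id] at a1
  fun_prop

lemma der_eq (p s e r : ℝ) (hp : 1 < p) (hs : s * s = 1) (hr : 0 < r) (h : 0 < s * r + e) :
    p * r ^ (p - 1) - p ^ (2 - p) / (p - 1) * (p - 1) * p * (s * s) * r * (s * r + e) ^ (p - 2)
      = p * r * (r ^ (p - 2) - ((s * r + e) / p) ^ (p - 2)) := by
  have : p - 1 ≠ 0 := by linarith
  rw [← P_mul p _ hp h, hs, pw_id p r hr, div_mul_cancel₀ _ this]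
  ring

lemma monoL (p s e a b : ℝ) (hp : 1 < p) (hp2 : p ≤ 2) (hs : s * s = 1) (ha : 0 ≤ a)
    (h : ∀ r, a < r → r < b → 0 < s * r + e ∧ p * r ≤ s * r + e) :
    MonotoneOn (fun r : ℝ => r ^ p + p ^ (2 - p) / (p - 1) *
      ((s * r + e) ^ p - p * (s * r) * (s * r + e) ^ (p - 1))) (Set.Icc a b) := by
  apply monotoneOn_of_deriv_nonneg (convex_Icc a b) (cont p _ s e hp).continuousOn
  · intro r hr
    rw [interior_Icc] at hr
    exact (der p _ s e r hp (h r hr.1 hr.2).1).differentiableAt.differentiableWithinAt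
  · intro r hr
    rw [interior_Icc] at hr
    obtain ⟨h1, h2⟩ := h r hr.1 hr.2
    have hr0 : 0 < r := lt_of_le_of_lt ha hr.1
    rw [(der p _ s e r hp h1).deriv, der_eq p s e r hp hs hr0 h1]
    apply mul_nonneg (by positivity)
    rw [sub_nonneg]
    apply Real.rpow_le_rpow_of_nonpos hr0 _ (by linarith)
    rw [le_div_iff₀ (by linarith)]; linarith

lemma antiL (p s e a b : ℝ) (hp : 1 < p) (hp2 : p ≤ 2) (hs : s * s = 1) (ha : 0 ≤ a)
    (h : ∀ r, a < r → r < b → 0 < s * r + e ∧ s * r + e ≤ p * r) :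
    AntitoneOn (fun r : ℝ => r ^ p + p ^ (2 - p) / (p - 1) *
      ((s * r + e) ^ p - p * (s * r) * (s * r + e) ^ (p - 1))) (Set.Icc a b) := by
  apply antitoneOn_of_deriv_nonpos (convex_Icc a b) (cont p _ s e hp).continuousOn
  · intro r hr
    rw [interior_Icc] at hr
    exact (der p _ s e r hp (h r hr.1 hr.2).1).differentiableAt.differentiableWithinAt
  · intro r hr
    rw [interior_Icc] at hr
    obtain ⟨h1, h2⟩ := h r hr.1 hr.2
    have hr0 : 0 < r := lt_of_le_of_lt ha hr.1
    rw [(der p _ s e r hp h1).deriv, der_eq p s e r hp hs hr0 h1]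
    apply mul_nonpos_of_nonneg_of_nonpos (by positivity)
    rw [sub_nonpos]
    apply Real.rpow_le_rpow_of_nonpos (by positivity) _ (by linarith)
    rw [div_le_iff₀ (by linarith)]; linarith

lemma regA (p r : ℝ) (hp : 1 < p) (hp2 : p ≤ 2) (hr : 0 ≤ r) :
    r ^ p + p ^ (2 - p) / (p - 1) * ((1 * r + 1) ^ p - p * (1 * r) * (1 * r + 1) ^ (p - 1))
      ≤ (1 / (p - 1)) ^ p := by
  have h0 : 0 < p - 1 := by linarith
  have hK : (1 / (p - 1)) ^ p + p ^ (2 - p) / (p - 1) * ((1 * (1 / (p - 1)) + 1) ^ p -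
      p * (1 * (1 / (p - 1))) * (1 * (1 / (p - 1)) + 1) ^ (p - 1)) = (1 / (p - 1)) ^ p := by
    rw [pw_id' p (1 * (1 / (p - 1)) + 1) hp (by positivity)]
    have : 1 * (1 / (p - 1)) + 1 = p * (1 * (1 / (p - 1))) := by field_simp; ring
    rw [this]; ring
  rw [← hK]
  rcases le_total r (1 / (p - 1)) with h | h
  · refine monoL p 1 1 0 (1 / (p - 1)) hp hp2 (by norm_num) le_rfl ?_ ⟨hr, h⟩ ⟨by positivity, le_rfl⟩ h
    intro r h1 h2
    rw [lt_div_iff₀ h0] at h2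
    constructor <;> nlinarith
  · refine antiL p 1 1 (1 / (p - 1)) r hp hp2 (by norm_num) (by positivity) ?_ ⟨le_rfl, h⟩ ⟨h, le_rfl⟩ h
    intro t h1 h2
    have : 0 < t := lt_trans (by positivity) h1
    rw [div_lt_iff₀ h0] at h1
    constructor <;> nlinarith

lemma regB (p r : ℝ) (hp : 1 < p) (hp2 : p ≤ 2) (hr : 0 ≤ r) (hr1 : r ≤ 1) :
    r ^ p + p ^ (2 - p) / (p - 1) * ((-1 * r + 1) ^ p - p * (-1 * r) * (-1 * r + 1) ^ (p - 1))
      ≤ (1 / (p - 1)) ^ p := by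
  have h0 : 0 < p - 1 := by linarith
  have hp0 : 0 < p := by linarith
  have hK : (1 / (p + 1)) ^ p + p ^ (2 - p) / (p - 1) * ((-1 * (1 / (p + 1)) + 1) ^ p -
      p * (-1 * (1 / (p + 1))) * (-1 * (1 / (p + 1)) + 1) ^ (p - 1)) ≤ (1 / (p - 1)) ^ p := by
    rw [pw_id' p (-1 * (1 / (p + 1)) + 1) hp (by
      have : -1 * (1 / (p + 1)) + 1 = p / (p + 1) := by field_simp; ring
      rw [this]; positivity)]
    have : -1 * (1 / (p + 1)) + 1 = p * (1 / (p + 1)) := by field_simp; ring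
    rw [this]
    have hk := key_log p hp hp2
    have e1 : (p * (1 / (p + 1))) ^ (p - 1) = p ^ (p - 1) * (1 / (p + 1)) ^ (p - 1) :=
      Real.mul_rpow hp0.le (by positivity)
    have e2 : p ^ (2 - p) * p ^ (p - 1) = p := by
      rw [← Real.rpow_add hp0]; ring_nf; simp
    have e3 := pw_id' p (1 / (p + 1)) hp (by positivity)
    have e4 := pw_id' p (1 / (p - 1)) hp (by positivity)
    have e5 : (1 / (p - 1)) ^ (p - 1) = ((p + 1) / (p - 1)) ^ (p - 1) * (1 / (p + 1)) ^ (p - 1) := by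
      rw [← Real.mul_rpow (by positivity) (by positivity)]; congr 1; field_simp
    rw [e1, e3, e4, e5]
    have hX : 0 < (1 / (p + 1)) ^ (p - 1) := by positivity
    set X := (1 / (p + 1)) ^ (p - 1)
    calc _ = 1 / (p + 1) * X * (1 + 2 * p * (p ^ (2 - p) * p ^ (p - 1)) / (p - 1)) := by ring
      _ = 1 / (p - 1) * ((2 * p - 1) * X) := by rw [e2]; field_simp; ring
      _ ≤ _ := by gcongr
  refine le_trans ?_ hK
  have hq : 1 / (p + 1) ≤ 1 := by rw [div_le_one (by linarith)]; linarith
  rcases le_total r (1 / (p + 1)) with h | h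
  · refine monoL p (-1) 1 0 (1 / (p + 1)) hp hp2 (by norm_num) le_rfl ?_ ⟨hr, h⟩ ⟨by positivity, le_rfl⟩ h
    intro r h1 h2
    have := h2.trans_le hq
    rw [lt_div_iff₀ (by linarith)] at h2
    constructor <;> nlinarith
  · refine antiL p (-1) 1 (1 / (p + 1)) 1 hp hp2 (by norm_num) (by positivity) ?_ ⟨le_rfl, hq⟩ ⟨h, hr1⟩ h
    intro t h1 h2
    rw [div_lt_iff₀ (by linarith)] at h1
    constructor <;> nlinarith

lemma regC (p r : ℝ) (hp : 1 < p) (hp2 : p ≤ 2) (hr : 1 ≤ r) :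
    r ^ p + p ^ (2 - p) / (p - 1) * ((1 * r + -1) ^ p - p * (1 * r) * (1 * r + -1) ^ (p - 1))
      ≤ (1 / (p - 1)) ^ p := by
  have h := antiL p 1 (-1) 1 r hp hp2 (by norm_num) (by norm_num) (by
    intro t h1 h2
    constructor <;> nlinarith) ⟨le_rfl, hr⟩ ⟨hr, le_rfl⟩ hr
  refine h.trans ?_
  have a1 : (0:ℝ) ^ p = 0 := Real.zero_rpow (by linarith)
  have a2 : (0:ℝ) ^ (p - 1) = 0 := Real.zero_rpow (by linarith)
  simpa [a1, a2] using K_ge p hp hp2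

lemma phi_pos (p y : ℝ) (hy : 0 ≤ y) (hp : 1 < p) : |y| ^ (p - 2) * y = y ^ (p - 1) := by
  rcases hy.eq_or_lt with rfl | hy
  · rw [Real.zero_rpow (by linarith)]; simp
  · rw [abs_of_pos hy, pw_id p y hy]; ring

/-- normalized -/
lemma pt1 (p r : ℝ) (hp : 1 < p) (hp2 : p ≤ 2) :
    |r| ^ p + p ^ (2 - p) / (p - 1) * (|1 + r| ^ p - p * (|1 + r| ^ (p - 2) * (1 + r)) * r)
      ≤ (1 / (p - 1)) ^ p := by
  rcases le_total 0 r with h | h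
  · have := regA p r hp hp2 h
    rw [phi_pos p _ (by linarith) hp, abs_of_nonneg h, abs_of_nonneg (by linarith)]
    refine le_of_eq_of_le ?_ this
    rw [one_mul, add_comm 1 r]; ring
  · rcases le_total (-1) r with h1 | h1
    · have := regB p (-r) hp hp2 (by linarith) (by linarith)
      rw [phi_pos p _ (by linarith) hp, abs_of_nonpos h, abs_of_nonneg (by linarith : 0 ≤ 1 + r)]
      refine le_of_eq_of_le ?_ this
      rw [show -1 * -r + 1 = 1 + r by ring]; ring
    · have := regC p (-r) hp hp2 (by linarith)
      have e := phi_pos p (-(1 + r)) (by linarith) hp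
      rw [abs_neg] at e
      rw [show |1 + r| ^ (p - 2) * (1 + r) = -(|1 + r| ^ (p - 2) * -(1 + r)) by ring, e,
        abs_of_nonpos h, abs_of_nonpos (by linarith : 1 + r ≤ 0)]
      refine le_of_eq_of_le ?_ this
      rw [show 1 * -r + -1 = -(1 + r) by ring]; ring

lemma pt (p x d : ℝ) (hp : 1 < p) (hp2 : p ≤ 2) :
    |d| ^ p + p ^ (2 - p) / (p - 1) * (|x + d| ^ p - p * (|x + d| ^ (p - 2) * (x + d)) * d)
      ≤ (1 / (p - 1)) ^ p * |x| ^ p := by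
  rcases eq_or_ne x 0 with rfl | hx
  · rw [abs_zero, Real.zero_rpow (by linarith), mul_zero, zero_add]
    have e : |d| ^ (p - 2) * d * d = |d| ^ p := by
      rw [mul_assoc, ← abs_mul_abs_self d, pw_id' p _ hp (abs_nonneg d)]
      rcases eq_or_ne d 0 with rfl | hd
      · simp
      · rw [pw_id p _ (abs_pos.2 hd)]; ring
    have : |d| ^ p + p ^ (2 - p) / (p - 1) * (|d| ^ p - p * (|d| ^ (p - 2) * d) * d)
        = (1 - p ^ (2 - p)) * |d| ^ p := by
      rw [mul_assoc p, e]
      have : p - 1 ≠ 0 := by linarith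
      field_simp; ring
    rw [this]
    apply mul_nonpos_of_nonpos_of_nonneg _ (by positivity)
    have := Real.one_le_rpow hp.le (by linarith : 0 ≤ 2 - p)
    linarith
  · have h := mul_le_mul_of_nonneg_right (pt1 p (d / x) hp hp2) (by positivity : 0 ≤ |x| ^ p)
    refine le_of_eq_of_le ?_ h
    have hxp := abs_pos.2 hx
    have e1 : |d| = |d / x| * |x| := by rw [← abs_mul]; field_simp
    have e2 : |x + d| = |1 + d / x| * |x| := by rw [← abs_mul]; congr 1; field_simp
    rw [e1, e2, Real.mul_rpow (by positivity) (by positivity),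
      Real.mul_rpow (by positivity) (by positivity), Real.mul_rpow (by positivity) (by positivity)]
    have e3 : |x| ^ p = |x| ^ (p - 2) * (x * x) := by
      rw [← abs_mul_abs_self x, pw_id' p _ hp (abs_nonneg x), pw_id p _ hxp]; ring
    rw [e3]; field_simp

lemma conv0 (p a b : ℝ) (hp : 1 < p) (hb : 0 ≤ b) :
    |b| ^ p + p * (|b| ^ (p - 2) * b) * (a - b) ≤ |a| ^ p := by
  rw [phi_pos p b hb hp, abs_of_nonneg hb, pw_id' p b hp hb]
  have hX : 0 ≤ b ^ (p - 1) := by positivity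
  rcases lt_or_ge a 0 with ha | ha
  · have h2 : 0 ≤ |a| ^ p := by positivity
    have : b * b ^ (p - 1) + p * b ^ (p - 1) * (a - b) = b ^ (p - 1) * (b + p * (a - b)) := by ring
    rw [this]
    refine le_trans (mul_nonpos_of_nonneg_of_nonpos hX ?_) h2
    nlinarith
  · rcases hb.eq_or_lt with rfl | hb
    · rw [Real.zero_rpow (by linarith)]; simp; positivity
    · have h := one_add_mul_self_le_rpow_one_add (s := a / b - 1) (by
        have : 0 ≤ a / b := by positivity
        linarith) hp.le
      have h' := mul_le_mul_of_nonneg_right h (by positivity : 0 ≤ b ^ p)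
      rw [show 1 + (a / b - 1) = a / b by ring, Real.div_rpow ha hb.le, div_mul_cancel₀ _ (by positivity),
        pw_id' p b hp hb.le] at h'
      rw [abs_of_nonneg ha]
      refine le_of_eq_of_le ?_ h'
      field_simp

lemma conv (p a b : ℝ) (hp : 1 < p) :
    |b| ^ p + p * (|b| ^ (p - 2) * b) * (a - b) ≤ |a| ^ p := by
  rcases le_total 0 b with hb | hb
  · exact conv0 p a b hp hb
  · have := conv0 p (-a) (-b) hp (by linarith)
    rw [abs_neg, abs_neg] at this
    refine le_of_eq_of_le ?_ this
    ring

lemma partial_bound (p : ℝ) (hp : 1 < p) (hp2 : p ≤ 2) (x : ℕ → ℝ) (N : ℕ) :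
    ∑ n ∈ Finset.range N,
      |(1 / ((n : ℝ) + 1)) * (∑ k ∈ Finset.range (n + 1), x (k + 1)) - x (n + 1)| ^ p
      + p ^ (2 - p) / (p - 1) * (N * |(1 / (N : ℝ)) * (∑ k ∈ Finset.range N, x (k + 1))| ^ p)
      ≤ (1 / (p - 1)) ^ p * ∑ n ∈ Finset.range N, |x (n + 1)| ^ p := by
  induction N with
  | zero => simp
  | succ n ih =>
    rw [Finset.sum_range_succ, Finset.sum_range_succ (fun n => |x (n + 1)| ^ p), mul_add]
    push_cast
    set c := p ^ (2 - p) / (p - 1) with hc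
    have hc0 : 0 ≤ c := by
      have : 0 < p - 1 := by linarith
      positivity
    set y := 1 / ((n : ℝ) + 1) * (∑ k ∈ Finset.range (n + 1), x (k + 1)) with hy
    set z := 1 / (n : ℝ) * (∑ k ∈ Finset.range n, x (k + 1)) with hz
    set d := y - x (n + 1) with hd
    have h1 := pt p (x (n + 1)) d hp hp2
    have exd : x (n + 1) + d = y := by rw [hd]; ring
    rw [exd] at h1
    have h2 := mul_le_mul_of_nonneg_left (conv p z y hp) (Nat.cast_nonneg n : (0:ℝ) ≤ n)
    have h3 : (n : ℝ) * (z - y) = d := by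
      have e1 : (n : ℝ) * z = ∑ k ∈ Finset.range n, x (k + 1) := by
        rw [hz]
        rcases Nat.eq_zero_or_pos n with rfl | h
        · simp
        · field_simp
      have e2 : ((n : ℝ) + 1) * y = ∑ k ∈ Finset.range n, x (k + 1) + x (n + 1) := by
        rw [hy, Finset.sum_range_succ]; field_simp
      rw [hd]; linarith
    have h4 : n * |y| ^ p + p * (|y| ^ (p - 2) * y) * d ≤ n * |z| ^ p := by
      rw [← h3]; refine le_of_eq_of_le ?_ h2; ring
    have h5 := mul_le_mul_of_nonneg_left h4 hc0
    linarith

lemma up (p : ℝ) (hp : 1 < p) (n : ℕ) (hn : n ≠ 0) :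
    |((n : ℝ) + 1) ^ (1 - 1 / p) - (n : ℝ) ^ (1 - 1 / p)| ^ p ≤ (1 - 1 / p) ^ p * (1 / (n : ℝ)) := by
  have hn0 : (0 : ℝ) < n := by positivity
  have hp0 : 0 < p := by linarith
  have hb0 : 0 < 1 - 1 / p := by rw [sub_pos, div_lt_one hp0]; exact hp
  have hb1 : 1 - 1 / p ≤ 1 := by
    have : 0 ≤ 1 / p := by positivity
    linarith
  have hX : (0 : ℝ) < (n : ℝ) ^ (1 - 1 / p) := by positivity
  have e1 : ((n : ℝ) + 1) ^ (1 - 1 / p) = (1 + 1 / n) ^ (1 - 1 / p) * (n : ℝ) ^ (1 - 1 / p) := by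
    rw [← Real.mul_rpow (by positivity) (by positivity)]; congr 1; field_simp
  have h1 : (1 + 1 / (n : ℝ)) ^ (1 - 1 / p) ≤ 1 + (1 - 1 / p) * (1 / n) :=
    rpow_one_add_le_one_add_mul_self (by
      have : 0 < 1 / (n : ℝ) := by positivity
      linarith) hb0.le hb1
  have h2 : (n : ℝ) ^ (1 - 1 / p) ≤ ((n : ℝ) + 1) ^ (1 - 1 / p) :=
    Real.rpow_le_rpow hn0.le (by linarith) hb0.le
  rw [abs_of_nonneg (by linarith)]
  have e2 : (n : ℝ) ^ (1 - 1 / p) = n * (n : ℝ) ^ (-(1 / p)) := by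
    rw [mul_comm, ← Real.rpow_add_one hn0.ne']; congr 1; ring
  have h3 : ((n : ℝ) + 1) ^ (1 - 1 / p) - (n : ℝ) ^ (1 - 1 / p) ≤ (1 - 1 / p) * (n : ℝ) ^ (-(1 / p)) := by
    rw [e1]
    have := mul_le_mul_of_nonneg_right h1 hX.le
    have e3 : (1 + (1 - 1 / p) * (1 / n)) * (n : ℝ) ^ (1 - 1 / p)
        = (n : ℝ) ^ (1 - 1 / p) + (1 - 1 / p) * (n : ℝ) ^ (-(1 / p)) := by
      rw [e2]; field_simp
    linarith
  refine (Real.rpow_le_rpow (by linarith) h3 hp0.le).trans (le_of_eq ?_)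
  rw [Real.mul_rpow hb0.le (by positivity), ← Real.rpow_mul hn0.le]
  have : -(1 / p) * p = -1 := by field_simp
  rw [this, Real.rpow_neg_one, one_div (n : ℝ)]

lemma low (p : ℝ) (hp : 1 < p) (hp2 : p ≤ 2) (n : ℕ) :
    (1 / p) ^ p * (1 / ((n : ℝ) + 1) - 2 * (1 / ((n : ℝ) + 1) ^ 2)) ≤
      |1 / ((n : ℝ) + 1) * ((n : ℝ) + 1) ^ (1 - 1 / p)
        - (((n : ℝ) + 1) ^ (1 - 1 / p) - (n : ℝ) ^ (1 - 1 / p))| ^ p := by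
  have hp0 : 0 < p := by linarith
  have ha0 : 0 < 1 / p := by positivity
  have ha1 : 1 / p < 1 := by rw [div_lt_one hp0]; exact hp
  rcases Nat.eq_zero_or_pos n with rfl | hn
  · have : (0:ℝ) ^ (1 - 1 / p) = 0 := Real.zero_rpow (by linarith)
    have h3 : 0 < (1 / p) ^ p := by positivity
    simp only [Nat.cast_zero, zero_add, Real.one_rpow, this]
    norm_num
    rw [Real.zero_rpow hp0.ne']
    simp only [one_div] at h3
    linarith
  have hn0 : (0 : ℝ) < n := by positivity
  set m : ℝ := (n : ℝ) + 1 with hm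
  have hm0 : 0 < m := by positivity
  set t : ℝ := n / m with ht
  have ht0 : 0 < t := by positivity
  have hs : 1 - t = 1 / m := by rw [ht, hm]; field_simp; ring
  have hs0 : 0 < 1 / m := by positivity
  have en : (n : ℝ) = t * m := by rw [ht]; field_simp
  have eb : t ^ (1 - 1 / p) = t * (t ^ (1 / p))⁻¹ := by
    rw [sub_eq_add_neg, Real.rpow_add ht0, Real.rpow_one, Real.rpow_neg ht0.le]
  have h1 : t ^ (1 / p) ≤ 1 - (1 / p) * (1 / m) := by
    have := rpow_one_add_le_one_add_mul_self (s := t - 1) (by linarith) ha0.le ha1.le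
    rw [show 1 + (t - 1) = t by ring] at this
    rw [← hs]; linarith
  have hT : 0 < t ^ (1 / p) := by positivity
  have h2 : 1 + (1 / p) * (1 / m) ≤ (t ^ (1 / p))⁻¹ := by
    rw [le_inv_comm₀ (by positivity) hT]
    refine h1.trans ?_
    rw [← one_div, le_div_iff₀ (by positivity)]
    nlinarith [sq_nonneg ((1 / p) * (1 / m))]
  have hM : 0 < m ^ (1 - 1 / p) := by positivity
  have e2 : m ^ (1 - 1 / p) = m * m ^ (-(1 / p)) := by
    rw [mul_comm, ← Real.rpow_add_one hm0.ne']; congr 1; ring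
  have hd : (1 / p) * (t * m ^ (-(1 / p))) ≤
      1 / m * m ^ (1 - 1 / p) - (m ^ (1 - 1 / p) - (n : ℝ) ^ (1 - 1 / p)) := by
    rw [en, Real.mul_rpow ht0.le hm0.le, eb]
    have h3 := mul_le_mul_of_nonneg_left h2 (mul_pos ht0 hM).le
    have h4 : t * m ^ (1 - 1 / p) * (1 + 1 / p * (1 / m)) =
        t * m ^ (1 - 1 / p) + (1 / p) * (t * m ^ (-(1 / p))) := by
      rw [e2]; field_simp
    have h5 : t * m ^ (1 - 1 / p) = m ^ (1 - 1 / p) - 1 / m * m ^ (1 - 1 / p) := by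
      rw [← hs]; ring
    linarith
  have hpos : 0 ≤ (1 / p) * (t * m ^ (-(1 / p))) := by positivity
  rw [abs_of_nonneg (hpos.trans hd)]
  refine le_trans ?_ (Real.rpow_le_rpow hpos hd hp0.le)
  rw [Real.mul_rpow ha0.le (by positivity), Real.mul_rpow ht0.le (by positivity), ← Real.rpow_mul hm0.le]
  have : -(1 / p) * p = -1 := by field_simp
  rw [this, Real.rpow_neg_one]
  gcongr
  have h6 : t ^ (2:ℝ) ≤ t ^ p := Real.rpow_le_rpow_of_exponent_ge ht0 (by linarith) hp2
  rw [Real.rpow_two] at h6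
  have h7 : 1 - 2 * (1 / m) ≤ t ^ p := by nlinarith [sq_nonneg (1 - t)]
  calc _ = (1 - 2 * (1 / m)) * m⁻¹ := by field_simp
    _ ≤ _ := by gcongr

theorem stmt6 (p : ℝ) (hp1 : 1 < p) (hp2 : p ≤ 2) :
    (∀ x : ℕ → ℝ, (Summable fun n : ℕ => |x (n + 1)| ^ p) →
      ∑' n : ℕ, |(1 / ((n : ℝ) + 1)) * (∑ k ∈ Finset.range (n + 1), x (k + 1)) - x (n + 1)| ^ p
        ≤ (1 / (p - 1)) ^ p * ∑' n : ℕ, |x (n + 1)| ^ p) ∧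
    ∀ c : ℝ, c < (1 / (p - 1)) ^ p → ∃ x : ℕ → ℝ,
      (Summable fun n : ℕ => |x (n + 1)| ^ p) ∧
      0 < ∑' n : ℕ, |x (n + 1)| ^ p ∧
      c * ∑' n : ℕ, |x (n + 1)| ^ p <
        ∑' n : ℕ, |(1 / ((n : ℝ) + 1)) * (∑ k ∈ Finset.range (n + 1), x (k + 1)) - x (n + 1)| ^ p := by
  have h0 : 0 < p - 1 := by linarith
  have hp0 : 0 < p := by linarith
  have bound : ∀ x : ℕ → ℝ, (Summable fun n : ℕ => |x (n + 1)| ^ p) → ∀ N : ℕ,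
      ∑ n ∈ Finset.range N,
        |(1 / ((n : ℝ) + 1)) * (∑ k ∈ Finset.range (n + 1), x (k + 1)) - x (n + 1)| ^ p
        ≤ (1 / (p - 1)) ^ p * ∑' n : ℕ, |x (n + 1)| ^ p := by
    intro x hx N
    have h1 := partial_bound p hp1 hp2 x N
    have h2 : ∑ n ∈ Finset.range N, |x (n + 1)| ^ p ≤ ∑' n : ℕ, |x (n + 1)| ^ p :=
      hx.sum_le_tsum _ (fun i _ => by positivity)
    have h3 := mul_le_mul_of_nonneg_left h2 (by positivity : 0 ≤ (1 / (p - 1)) ^ p)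
    have h4 : 0 ≤ p ^ (2 - p) / (p - 1) *
      (N * |(1 / (N : ℝ)) * (∑ k ∈ Finset.range N, x (k + 1))| ^ p) := by positivity
    linarith
  refine ⟨fun x hx => Real.tsum_le_of_sum_range_le (fun n => by positivity) (bound x hx), ?_⟩
  intro c hc
  have hb0 : 0 < 1 - 1 / p := by rw [sub_pos, div_lt_one hp0]; exact hp1
  have hb0p : 0 < (1 - 1 / p) ^ p := by positivity
  set c' := max c 0 with hc'
  have hc'0 : 0 ≤ c' := le_max_right _ _
  have hc'1 : c' < (1 / (p - 1)) ^ p := max_lt hc (by positivity)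
  have eK : (1 / (p - 1)) ^ p * (1 - 1 / p) ^ p = (1 / p) ^ p := by
    rw [← Real.mul_rpow (by positivity) hb0.le]; congr 1; field_simp
  have hgap : 0 < (1 / p) ^ p - c' * (1 - 1 / p) ^ p := by
    rw [← eK, ← sub_mul]; exact mul_pos (by linarith) hb0p
  have hsq : Summable (fun n : ℕ => 1 / ((n : ℝ) + 1) ^ 2) := by
    have := (summable_nat_add_iff 1).2 (Real.summable_one_div_nat_pow.2 (by norm_num : 1 < 2))
    simpa using this
  set M := ∑' n : ℕ, 1 / ((n : ℝ) + 1) ^ 2 with hM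
  obtain ⟨N, hN⟩ := ((Filter.tendsto_atTop.1 Real.tendsto_sum_range_one_div_nat_succ_atTop
    ((c' + (1 / p) ^ p * (2 * M) + 1) / ((1 / p) ^ p - c' * (1 - 1 / p) ^ p))).and
      (Filter.eventually_ge_atTop 1)).exists
  obtain ⟨hN, hN1⟩ := hN
  rw [div_le_iff₀ hgap] at hN
  set H := ∑ i ∈ Finset.range N, 1 / ((i : ℝ) + 1) with hH
  let x : ℕ → ℝ := fun k => if k ≤ N then (k : ℝ) ^ (1 - 1 / p) - ((k - 1 : ℕ) : ℝ) ^ (1 - 1 / p) else 0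
  have hx : ∀ n < N, x (n + 1) = ((n : ℝ) + 1) ^ (1 - 1 / p) - (n : ℝ) ^ (1 - 1 / p) := by
    intro n hn
    simp only [x]
    rw [if_pos (by omega)]
    simp
  have hx0 : ∀ n ∉ Finset.range N, |x (n + 1)| ^ p = 0 := by
    intro n hn
    rw [Finset.mem_range] at hn
    simp only [x]
    rw [if_neg (by omega), abs_zero, Real.zero_rpow hp0.ne']
  have hsum : ∀ n < N, ∑ k ∈ Finset.range (n + 1), x (k + 1) = ((n : ℝ) + 1) ^ (1 - 1 / p) := by
    intro n hn
    rw [Finset.sum_congr rfl (fun k hk => hx k (by rw [Finset.mem_range] at hk; omega))]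
    have := Finset.sum_range_sub (fun k : ℕ => (k : ℝ) ^ (1 - 1 / p)) (n + 1)
    push_cast at this
    rw [this, Real.zero_rpow hb0.ne', sub_zero]
  have hS : Summable fun n : ℕ => |x (n + 1)| ^ p := summable_of_ne_finset_zero hx0
  have hT : ∑' n : ℕ, |x (n + 1)| ^ p = ∑ n ∈ Finset.range N, |x (n + 1)| ^ p :=
    tsum_eq_sum hx0
  have hx1 : |x (0 + 1)| ^ p = 1 := by
    rw [hx 0 (by omega)]
    simp only [Nat.cast_zero, zero_add, Real.one_rpow]
    rw [Real.zero_rpow hb0.ne']; simp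
  have hTpos : 0 < ∑' n : ℕ, |x (n + 1)| ^ p :=
    hS.tsum_pos (fun n => by positivity) 0 (by rw [hx1]; norm_num)
  have hU : ∑' n : ℕ, |x (n + 1)| ^ p ≤ 1 + (1 - 1 / p) ^ p * H := by
    obtain ⟨L, rfl⟩ : ∃ L, N = L + 1 := ⟨N - 1, by omega⟩
    rw [hT, Finset.sum_range_succ', hx1, add_comm]
    gcongr
    rw [hH, Finset.sum_range_succ, mul_add, Finset.mul_sum]
    have : 0 ≤ (1 - 1 / p) ^ p * (1 / ((L : ℝ) + 1)) := by positivity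
    refine le_trans (Finset.sum_le_sum (fun k hk => ?_)) (le_add_of_nonneg_right this)
    rw [hx (k + 1) (by rw [Finset.mem_range] at hk; omega)]
    have := up p hp1 (k + 1) (by omega)
    push_cast at this ⊢
    exact this
  have hD : Summable fun n : ℕ =>
      |(1 / ((n : ℝ) + 1)) * (∑ k ∈ Finset.range (n + 1), x (k + 1)) - x (n + 1)| ^ p :=
    summable_of_sum_range_le (fun n => by positivity) (bound x hS)
  have hLo : (1 / p) ^ p * (H - 2 * M) ≤ ∑' n : ℕ,
      |(1 / ((n : ℝ) + 1)) * (∑ k ∈ Finset.range (n + 1), x (k + 1)) - x (n + 1)| ^ p := by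
    refine le_trans ?_ (hD.sum_le_tsum (Finset.range N) (fun i _ => by positivity))
    have h1 : ∑ n ∈ Finset.range N, 1 / ((n : ℝ) + 1) ^ 2 ≤ M :=
      hsq.sum_le_tsum _ (fun i _ => by positivity)
    calc (1 / p) ^ p * (H - 2 * M)
        ≤ (1 / p) ^ p * (H - 2 * ∑ n ∈ Finset.range N, 1 / ((n : ℝ) + 1) ^ 2) := by gcongr
      _ = ∑ n ∈ Finset.range N,
          (1 / p) ^ p * (1 / ((n : ℝ) + 1) - 2 * (1 / ((n : ℝ) + 1) ^ 2)) := by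
        rw [hH, Finset.mul_sum, ← Finset.sum_sub_distrib, Finset.mul_sum]
      _ ≤ _ := by
        refine Finset.sum_le_sum (fun n hn => ?_)
        rw [Finset.mem_range] at hn
        rw [hsum n hn, hx n hn]
        exact low p hp1 hp2 n
  refine ⟨x, hS, hTpos, ?_⟩
  have h1 : c * ∑' n : ℕ, |x (n + 1)| ^ p ≤ c' * ∑' n : ℕ, |x (n + 1)| ^ p :=
    mul_le_mul_of_nonneg_right (le_max_left _ _) hTpos.le
  have h2 := mul_le_mul_of_nonneg_left hU hc'0
  refine lt_of_le_of_lt (h1.trans h2) (lt_of_lt_of_le ?_ hLo)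
  linarith
end
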